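/- arXiv:2411.09653 — 2 statements merged into one kernel-verified Lean document; each statement's English description precedes it below -/
import Mathlib

section
/- Let X̄ ~ N(m, Σ) be a Gaussian random vector on ℝ^n with Σ symmetric positive definite, let W̄ ~ N(0, R) on ℝ^m with R symmetric positive definite be independent of X̄, let H be an m×n matrix, Ȳ := HX̄ + W̄, and K := ΣHᵀ(HΣHᵀ+R)⁻¹. Then for every y ∈ ℝ^m, the law of X̄ + K(y − Ȳ) is the Gaussian N(m + K(y − Hm), Σ − ΣHᵀ(HΣHᵀ+R)⁻¹HΣ). -/
open MeasureTheory ProbabilityTheory Matrix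
open scoped Matrix ENNReal

/-- The multivariate Gaussian measure `N(m, Σ)` on `ℝ^n`, defined through its density
with respect to Lebesgue measure. -/
noncomputable def mvGaussian {n : ℕ} (m : Fin n → ℝ) (S : Matrix (Fin n) (Fin n) ℝ) :
    Measure (Fin n → ℝ) :=
  volume.withDensity fun x =>
    ENNReal.ofReal ((Real.sqrt ((2 * Real.pi) ^ n * S.det))⁻¹ *
      Real.exp (-(1 / 2) * ((x - m) ⬝ᵥ (S⁻¹).mulVec (x - m))))

/-!
The update is `X̄ + K(y − Ȳ) = Ky + (1 − KH)X̄ − KW̄`, an affine function of independent Gaussians,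
so its law is Gaussian with covariance `(1 − KH)Σ(1 − KH)ᵀ + KRKᵀ`. This collapses to `Σ − KHΣ`
because `K(HΣHᵀ + R) = ΣHᵀ`, and by Woodbury's identity it is the inverse of the positive definite
matrix `Σ⁻¹ + HᵀR⁻¹H`. The two summands may be degenerate and then have no density, so they are
added as Mathlib's `multivariateGaussian` measures, by means of characteristic functions. These
agree with the densities for positive definite covariance: both are images of the product of
standard Gaussians under `z ↦ m + Az` with `AAᵀ = Σ`.
-/

section KalmanAlgebra

variable {ι κ 𝕜 : Type*} [Fintype ι]

theorem one_sub_mul_mul_transpose_add_eq_sub [Fintype κ] [DecidableEq ι] [CommRing 𝕜]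
    {S : Matrix ι ι 𝕜} {R : Matrix κ κ 𝕜} {H : Matrix κ ι 𝕜} {K : Matrix ι κ 𝕜}
    (hK : K * (H * S * Hᵀ + R) = S * Hᵀ) :
    (1 - K * H) * S * (1 - K * H)ᵀ + K * R * Kᵀ = S - K * H * S := by
  calc (1 - K * H) * S * (1 - K * H)ᵀ + K * R * Kᵀ
      = S - K * H * S - S * Hᵀ * Kᵀ + K * (H * S * Hᵀ + R) * Kᵀ := by
        simp only [transpose_sub, transpose_mul, transpose_one, Matrix.sub_mul, Matrix.mul_sub,
          Matrix.mul_add, Matrix.add_mul, Matrix.one_mul, Matrix.mul_one, Matrix.mul_assoc]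
        abel
    _ = S - K * H * S := by rw [hK, sub_add_cancel]

theorem posDef_mul_mul_conjTranspose_add [Finite κ] [Ring 𝕜] [PartialOrder 𝕜] [StarRing 𝕜]
    [AddLeftMono 𝕜] {S : Matrix ι ι 𝕜} {R : Matrix κ κ 𝕜} (hS : S.PosSemidef) (hR : R.PosDef)
    (H : Matrix κ ι 𝕜) : (H * S * Hᴴ + R).PosDef :=
  .posSemidef_add (hS.mul_mul_conjTranspose_same H) hR

theorem posDef_sub_mul_inv_mul [Fintype κ] [DecidableEq κ] [Field 𝕜] [PartialOrder 𝕜]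
    [StarRing 𝕜] [AddLeftMono 𝕜] {S : Matrix ι ι 𝕜} {R : Matrix κ κ 𝕜} (hS : S.PosDef)
    (hR : R.PosDef) (H : Matrix κ ι 𝕜) :
    (S - S * Hᴴ * (H * S * Hᴴ + R)⁻¹ * H * S).PosDef := by
  classical
  have hSS : S⁻¹⁻¹ = S := nonsing_inv_nonsing_inv S ((isUnit_iff_isUnit_det S).1 hS.isUnit)
  have hRR : R⁻¹⁻¹ = R := nonsing_inv_nonsing_inv R ((isUnit_iff_isUnit_det R).1 hR.isUnit)
  have hprecision : (S⁻¹ + Hᴴ * R⁻¹ * H).PosDef :=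
    hS.inv.add_posSemidef (hR.inv.posSemidef.conjTranspose_mul_mul_same H)
  have hinnovation : IsUnit (R⁻¹⁻¹ + H * S⁻¹⁻¹ * Hᴴ) := by
    rw [hSS, hRR, add_comm]
    exact (posDef_mul_mul_conjTranspose_add hS.posSemidef hR H).isUnit
  have hwoodbury :=
    add_mul_mul_inv_eq_sub S⁻¹ Hᴴ R⁻¹ H hS.inv.isUnit hR.inv.isUnit hinnovation
  rw [hSS, hRR, add_comm R] at hwoodbury
  exact hwoodbury ▸ hprecision.inv

end KalmanAlgebra

section MultivariateGaussian

theorem charFun_map_continuousLinearMap {E F : Type*}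
    [NormedAddCommGroup E] [InnerProductSpace ℝ E] [CompleteSpace E]
    [MeasurableSpace E] [OpensMeasurableSpace E]
    [NormedAddCommGroup F] [InnerProductSpace ℝ F] [CompleteSpace F]
    [MeasurableSpace F] [BorelSpace F]
    (μ : Measure E) (L : E →L[ℝ] F) (t : F) :
    charFun (μ.map L) t = charFun μ (L.adjoint t) := by
  rw [charFun_apply, charFun_apply, integral_map (by fun_prop)
    (Continuous.aestronglyMeasurable (by fun_prop))]
  simp only [L.adjoint_inner_right]

variable {ι κ : Type*} [Fintype ι] [DecidableEq ι] [Fintype κ] [DecidableEq κ]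

theorem map_const_add_toEuclideanLin_multivariateGaussian (μ : EuclideanSpace ℝ ι)
    {S : Matrix ι ι ℝ} (hS : S.PosSemidef) (c : EuclideanSpace ℝ κ) (B : Matrix κ ι ℝ) :
    (multivariateGaussian μ S).map (fun x => c + B.toEuclideanLin x) =
      multivariateGaussian (c + B.toEuclideanLin μ) (B * S * Bᵀ) := by
  have hBSB : (B * S * Bᵀ).PosSemidef := hS.mul_mul_conjTranspose_same B
  set L := B.toEuclideanLin.toContinuousLinearMap with hL
  have hadjoint (t : EuclideanSpace ℝ κ) : L.adjoint t = Bᵀ.toEuclideanLin t := by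
    rw [← conjTranspose_eq_transpose_of_trivial, toEuclideanLin_conjTranspose_eq_adjoint]
    rfl
  have hcomp : (multivariateGaussian μ S).map (fun x => c + B.toEuclideanLin x) =
      ((multivariateGaussian μ S).map L).map (c + ·) :=
    (Measure.map_map (measurable_const_add c) L.measurable).symm
  rw [hcomp]
  refine Measure.ext_of_charFun (funext fun t => ?_)
  rw [charFun_map_const_add, charFun_map_continuousLinearMap, hadjoint,
    charFun_multivariateGaussian hS, charFun_multivariateGaussian hBSB, ← Complex.exp_add]
  have hmean : inner ℝ (Bᵀ.toEuclideanLin t) μ = inner ℝ t (B.toEuclideanLin μ) := by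
    rw [← hadjoint, L.adjoint_inner_left, hL, LinearMap.coe_toContinuousLinearMap']
  have hcov : (Bᵀ.toEuclideanLin t).ofLp ⬝ᵥ S *ᵥ (Bᵀ.toEuclideanLin t).ofLp =
      t.ofLp ⬝ᵥ (B * S * Bᵀ) *ᵥ t.ofLp := by
    rw [ofLp_toLpLin, toLin'_apply, ← mulVec_mulVec, ← mulVec_mulVec, dotProduct_comm,
      dotProduct_transpose_mulVec]
  rw [hmean, hcov, inner_add_right, real_inner_comm c t]
  push_cast
  ring_nf

theorem multivariateGaussian_conv_multivariateGaussian (μ ν : EuclideanSpace ℝ ι)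
    {S T : Matrix ι ι ℝ} (hS : S.PosSemidef) (hT : T.PosSemidef) :
    multivariateGaussian μ S ∗ multivariateGaussian ν T = multivariateGaussian (μ + ν) (S + T) := by
  refine Measure.ext_of_charFun (funext fun t => ?_)
  rw [charFun_conv, charFun_multivariateGaussian hS, charFun_multivariateGaussian hT,
    charFun_multivariateGaussian (hS.add hT), ← Complex.exp_add, inner_add_right, add_mulVec,
    dotProduct_add]
  push_cast
  ring_nf

end MultivariateGaussian

section Density

theorem map_withDensity_comp {α β : Type*} [MeasurableSpace α] [MeasurableSpace β] (μ : Measure α)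
    {f : α → β} (hf : Measurable f) {g : β → ℝ≥0∞} (hg : Measurable g) :
    (μ.withDensity fun x => g (f x)).map f = (μ.map f).withDensity g := by
  ext s hs
  rw [Measure.map_apply hf hs, withDensity_apply _ (hf hs), withDensity_apply _ hs,
    setLIntegral_map hs hg hf]

theorem pi_withDensity_ofReal {ι : Type*} [Fintype ι] {α : ι → Type*} [∀ i, MeasurableSpace (α i)]
    (μ : ∀ i, Measure (α i)) [∀ i, SigmaFinite (μ i)] {f : ∀ i, α i → ℝ}
    (hf : ∀ i, Integrable (f i) (μ i)) (hf₀ : ∀ i x, 0 ≤ f i x) :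
    Measure.pi (fun i => (μ i).withDensity fun x => ENNReal.ofReal (f i x)) =
      (Measure.pi μ).withDensity fun x => ENNReal.ofReal (∏ i, f i (x i)) := by
  have (i : ι) : IsFiniteMeasure ((μ i).withDensity fun x => ENNReal.ofReal (f i x)) :=
    isFiniteMeasure_withDensity_ofReal (hf i).2
  refine Measure.pi_eq fun s hs => ?_
  have hint : Integrable (fun x => ∏ i, f i (x i)) (Measure.pi fun i => (μ i).restrict (s i)) :=
    .fintype_prod_dep fun i => (hf i).integrableOn
  rw [withDensity_apply _ (.univ_pi hs), Measure.restrict_pi_pi,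
    ← ofReal_integral_eq_lintegral_ofReal hint
      (.of_forall fun x => Finset.prod_nonneg fun i _ => hf₀ i _),
    integral_fintype_prod_eq_prod, ENNReal.ofReal_prod_of_nonneg
      fun i _ => integral_nonneg (hf₀ i)]
  refine Finset.prod_congr rfl fun i _ => ?_
  rw [withDensity_apply _ (hs i), ofReal_integral_eq_lintegral_ofReal (hf i).integrableOn
    (.of_forall (hf₀ i))]

theorem map_const_add_mulVec_volume {ι : Type*} [Fintype ι] [DecidableEq ι] {A : Matrix ι ι ℝ}
    (hA : A.det ≠ 0) (c : ι → ℝ) :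
    (volume : Measure (ι → ℝ)).map (fun x => c + A *ᵥ x) =
      ENNReal.ofReal |A.det⁻¹| • volume := by
  have hA_meas : Measurable (toLin' A) := (by fun_prop : Continuous fun x => A *ᵥ x).measurable
  calc (volume : Measure (ι → ℝ)).map (fun x => c + A *ᵥ x)
      = (volume.map (toLin' A)).map (c + ·) := (Measure.map_map (by fun_prop) hA_meas).symm
    _ = ENNReal.ofReal |A.det⁻¹| • volume := by
        rw [Real.map_matrix_volume_pi_eq_smul_volume_pi hA, Measure.map_smul, map_add_left_eq_self]

/-- The density of `mvGaussian m S` with respect to Lebesgue measure, real-valued like Mathlib's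
`gaussianPDFReal`. Meaningful only for positive definite `S`: `S⁻¹` is `0` for singular `S`. -/
noncomputable def mvGaussianPDFReal {n : ℕ} (m : Fin n → ℝ) (S : Matrix (Fin n) (Fin n) ℝ)
    (x : Fin n → ℝ) : ℝ :=
  (√((2 * Real.pi) ^ n * S.det))⁻¹ * Real.exp (-(1 / 2) * ((x - m) ⬝ᵥ S⁻¹ *ᵥ (x - m)))

variable {n : ℕ}

theorem mvGaussian_eq_withDensity (m : Fin n → ℝ) (S : Matrix (Fin n) (Fin n) ℝ) :
    mvGaussian m S = volume.withDensity fun x => ENNReal.ofReal (mvGaussianPDFReal m S x) :=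
  rfl

theorem measurable_mvGaussianPDFReal (m : Fin n → ℝ) (S : Matrix (Fin n) (Fin n) ℝ) :
    Measurable (mvGaussianPDFReal m S) := by
  unfold mvGaussianPDFReal
  exact Continuous.measurable (by fun_prop)

theorem mvGaussianPDFReal_zero_one (x : Fin n → ℝ) :
    mvGaussianPDFReal 0 1 x = ∏ i, gaussianPDFReal 0 1 (x i) := by
  have hnorm : √((2 * Real.pi) ^ n) = √(2 * Real.pi) ^ n := by
    simpa using Real.sqrt_prod Finset.univ fun (_ : Fin n) _ => Real.two_pi_pos.le
  have hquad : -(1 / 2) * (x ⬝ᵥ x) = ∑ i, -x i ^ 2 / 2 := by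
    rw [dotProduct, Finset.mul_sum]
    exact Finset.sum_congr rfl fun i _ => by ring
  rw [mvGaussianPDFReal, sub_zero, inv_one, one_mulVec, det_one, mul_one, hnorm, hquad,
    Real.exp_sum]
  simp only [gaussianPDFReal, NNReal.coe_one, mul_one, sub_zero, Finset.prod_mul_distrib,
    Finset.prod_const, Finset.card_univ, Fintype.card_fin, inv_pow]

theorem mvGaussianPDFReal_const_add_mulVec {A : Matrix (Fin n) (Fin n) ℝ} (hA : A.det ≠ 0)
    (c m x : Fin n → ℝ) (S : Matrix (Fin n) (Fin n) ℝ) :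
    mvGaussianPDFReal (c + A *ᵥ m) (A * S * Aᵀ) (c + A *ᵥ x) =
      |A.det⁻¹| * mvGaussianPDFReal m S x := by
  have hnorm : √((2 * Real.pi) ^ n * (A * S * Aᵀ).det) =
      |A.det| * √((2 * Real.pi) ^ n * S.det) := by
    rw [← Real.sqrt_sq_eq_abs, ← Real.sqrt_mul (sq_nonneg _), det_mul, det_mul, det_transpose]
    ring_nf
  have hquad (v : Fin n → ℝ) : (A *ᵥ v) ⬝ᵥ (A * S * Aᵀ)⁻¹ *ᵥ (A *ᵥ v) = v ⬝ᵥ S⁻¹ *ᵥ v := by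
    have hAu : IsUnit A.det := hA.isUnit
    have hconj : Aᵀ * (A * S * Aᵀ)⁻¹ * A = S⁻¹ := by
      rw [Matrix.mul_inv_rev, Matrix.mul_inv_rev,
        mul_nonsing_inv_cancel_left _ _ (A.isUnit_det_transpose hAu),
        nonsing_inv_mul_cancel_right _ _ hAu]
    rw [dotProduct_comm, ← dotProduct_transpose_mulVec A, mulVec_mulVec, mulVec_mulVec, hconj]
  rw [mvGaussianPDFReal, mvGaussianPDFReal, add_sub_add_left_eq_sub, ← mulVec_sub, hquad, hnorm,
    mul_inv, abs_inv, mul_assoc]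

theorem mvGaussian_zero_one_eq_pi :
    (mvGaussian 0 1 : Measure (Fin n → ℝ)) = Measure.pi fun _ => gaussianReal 0 1 := by
  simp only [mvGaussian_eq_withDensity, mvGaussianPDFReal_zero_one,
    gaussianReal_of_var_ne_zero 0 one_ne_zero, gaussianPDF_def]
  exact (pi_withDensity_ofReal _ (fun _ => integrable_gaussianPDFReal 0 1)
    fun _ => gaussianPDFReal_nonneg 0 1).symm

theorem map_const_add_mulVec_mvGaussian {A : Matrix (Fin n) (Fin n) ℝ} (hA : A.det ≠ 0)
    (c m : Fin n → ℝ) (S : Matrix (Fin n) (Fin n) ℝ) :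
    (mvGaussian m S).map (fun x => c + A *ᵥ x) = mvGaussian (c + A *ᵥ m) (A * S * Aᵀ) := by
  set g := fun y => ENNReal.ofReal (mvGaussianPDFReal (c + A *ᵥ m) (A * S * Aᵀ) y) with hg
  have hg_meas : Measurable g := (measurable_mvGaussianPDFReal _ _).ennreal_ofReal
  have hT_meas : Measurable fun x => c + A *ᵥ x := Continuous.measurable (by fun_prop)
  have hdet : ENNReal.ofReal |A.det| * ENNReal.ofReal |A.det⁻¹| = 1 := by
    rw [← ENNReal.ofReal_mul (abs_nonneg _), ← abs_mul, mul_inv_cancel₀ hA, abs_one,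
      ENNReal.ofReal_one]
  have hdensity : (fun x => ENNReal.ofReal (mvGaussianPDFReal m S x)) =
      ENNReal.ofReal |A.det| • fun x => g (c + A *ᵥ x) := by
    funext x
    simp only [Pi.smul_apply, smul_eq_mul, hg, mvGaussianPDFReal_const_add_mulVec hA,
      ENNReal.ofReal_mul (abs_nonneg _), ← mul_assoc, hdet, one_mul]
  calc (mvGaussian m S).map (fun x => c + A *ᵥ x)
      = ENNReal.ofReal |A.det| •
          (volume.withDensity fun x => g (c + A *ᵥ x)).map (fun x => c + A *ᵥ x) := by
        rw [mvGaussian_eq_withDensity, hdensity, withDensity_smul' _ _ ENNReal.ofReal_ne_top,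
          Measure.map_smul]
    _ = (ENNReal.ofReal |A.det| * ENNReal.ofReal |A.det⁻¹|) • volume.withDensity g := by
        rw [map_withDensity_comp _ hT_meas hg_meas, map_const_add_mulVec_volume hA,
          withDensity_smul_measure, smul_smul]
    _ = mvGaussian (c + A *ᵥ m) (A * S * Aᵀ) := by
        rw [hdet, one_smul, mvGaussian_eq_withDensity]

end Density

open scoped ComplexOrder MatrixOrder Matrix.Norms.L2Operator in
theorem exists_det_ne_zero_and_mul_conjTranspose_eq {ι 𝕜 : Type*} [Fintype ι] [DecidableEq ι]
    [RCLike 𝕜] {S : Matrix ι ι 𝕜} (hS : S.PosDef) : ∃ A : Matrix ι ι 𝕜, A.det ≠ 0 ∧ A * Aᴴ = S := by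
  have hself : (CFC.sqrt S)ᴴ = CFC.sqrt S := (CFC.sqrt_nonneg S).isSelfAdjoint.star_eq
  have hsq : CFC.sqrt S * CFC.sqrt S = S := CFC.sqrt_mul_sqrt_self S hS.posSemidef.nonneg
  refine ⟨CFC.sqrt S, fun hdet => hS.det_pos.ne' ?_, by rw [hself, hsq]⟩
  rw [← hsq, det_mul, hdet, zero_mul]

section Law

variable {n p q : ℕ}

theorem map_toLp_mvGaussian (m : Fin n → ℝ) {S : Matrix (Fin n) (Fin n) ℝ} (hS : S.PosDef) :
    (mvGaussian m S).map (WithLp.toLp 2) = multivariateGaussian (WithLp.toLp 2 m) S := by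
  obtain ⟨A, hA, rfl⟩ := exists_det_ne_zero_and_mul_conjTranspose_eq hS
  rw [conjTranspose_eq_transpose_of_trivial]
  have hstd : (mvGaussian (0 : Fin n → ℝ) 1).map (WithLp.toLp 2) = multivariateGaussian 0 1 := by
    rw [mvGaussian_zero_one_eq_pi, map_pi_eq_stdGaussian, multivariateGaussian_zero_one]
  have hT_meas : Measurable fun x => m + A *ᵥ x := Continuous.measurable (by fun_prop)
  calc (mvGaussian m (A * Aᵀ)).map (WithLp.toLp 2)
      = ((mvGaussian 0 1).map fun x => m + A *ᵥ x).map (WithLp.toLp 2) := by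
        rw [map_const_add_mulVec_mvGaussian hA, mulVec_zero, add_zero, Matrix.mul_one]
    _ = ((mvGaussian 0 1).map (WithLp.toLp 2)).map
          fun x => WithLp.toLp 2 m + A.toEuclideanLin x := by
        rw [Measure.map_map (by fun_prop) hT_meas, Measure.map_map (by fun_prop) (by fun_prop)]
        rfl
    _ = multivariateGaussian (WithLp.toLp 2 m) (A * Aᵀ) := by
        rw [hstd, map_const_add_toEuclideanLin_multivariateGaussian 0 .one, map_zero, add_zero,
          Matrix.mul_one]

variable {Ω : Type*} [MeasurableSpace Ω] {P : Measure Ω}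

theorem hasLaw_mvGaussian_iff {X : Ω → Fin n → ℝ} {m : Fin n → ℝ} {S : Matrix (Fin n) (Fin n) ℝ}
    (hS : S.PosDef) :
    HasLaw X (mvGaussian m S) P ↔
      HasLaw (fun ω => WithLp.toLp 2 (X ω)) (multivariateGaussian (WithLp.toLp 2 m) S) P := by
  have hcomp (hX : AEMeasurable X P) :
      P.map (fun ω => WithLp.toLp 2 (X ω)) = (P.map X).map (WithLp.toLp 2) :=
    (AEMeasurable.map_map_of_aemeasurable (by fun_prop) hX).symm
  refine ⟨fun h => ⟨by fun_prop, ?_⟩, fun h => ?_⟩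
  · rw [hcomp h.aemeasurable, h.map_eq, map_toLp_mvGaussian m hS]
  · have hX : AEMeasurable X P := (WithLp.measurable_ofLp 2 _).comp_aemeasurable h.aemeasurable
    refine ⟨hX, (MeasurableEquiv.toLp 2 (Fin n → ℝ)).map_measurableEquiv_injective ?_⟩
    rw [MeasurableEquiv.coe_toLp, ← hcomp hX, h.map_eq, map_toLp_mvGaussian m hS]

theorem hasLaw_const_add_mulVec_add_mulVec_mvGaussian {X : Ω → Fin n → ℝ} {W : Ω → Fin p → ℝ}
    {a : Fin n → ℝ} {b : Fin p → ℝ} {S : Matrix (Fin n) (Fin n) ℝ} {R : Matrix (Fin p) (Fin p) ℝ}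
    (hX : HasLaw X (mvGaussian a S) P) (hW : HasLaw W (mvGaussian b R) P) (hXW : X ⟂ᵢ[P] W)
    (hS : S.PosDef) (hR : R.PosDef) (c : Fin q → ℝ) (A : Matrix (Fin q) (Fin n) ℝ)
    (B : Matrix (Fin q) (Fin p) ℝ) (hAB : (A * S * Aᵀ + B * R * Bᵀ).PosDef) :
    HasLaw (fun ω => c + A *ᵥ X ω + B *ᵥ W ω)
      (mvGaussian (c + A *ᵥ a + B *ᵥ b) (A * S * Aᵀ + B * R * Bᵀ)) P := by
  rw [hasLaw_mvGaussian_iff hS] at hX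
  rw [hasLaw_mvGaussian_iff hR] at hW
  rw [hasLaw_mvGaussian_iff hAB]
  have hAS : (A * S * Aᵀ).PosSemidef := hS.posSemidef.mul_mul_conjTranspose_same A
  have hBR : (B * R * Bᵀ).PosSemidef := hR.posSemidef.mul_mul_conjTranspose_same B
  have hA : HasLaw (fun x => WithLp.toLp 2 c + A.toEuclideanLin x)
      (multivariateGaussian (WithLp.toLp 2 (c + A *ᵥ a)) (A * S * Aᵀ))
      (multivariateGaussian (WithLp.toLp 2 a) S) :=
    ⟨by fun_prop, map_const_add_toEuclideanLin_multivariateGaussian _ hS.posSemidef _ A⟩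
  have hB : HasLaw (fun w => 0 + B.toEuclideanLin w)
      (multivariateGaussian (0 + WithLp.toLp 2 (B *ᵥ b)) (B * R * Bᵀ))
      (multivariateGaussian (WithLp.toLp 2 b) R) :=
    ⟨by fun_prop, map_const_add_toEuclideanLin_multivariateGaussian _ hR.posSemidef 0 B⟩
  simp only [zero_add] at hB
  have hindep : (fun ω => WithLp.toLp 2 (c + A *ᵥ X ω)) ⟂ᵢ[P]
      (fun ω => WithLp.toLp 2 (B *ᵥ W ω)) :=
    hXW.comp (φ := fun x => WithLp.toLp 2 (c + A *ᵥ x)) (ψ := fun w => WithLp.toLp 2 (B *ᵥ w))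
      (Continuous.measurable (by fun_prop)) (Continuous.measurable (by fun_prop))
  have hsum := hindep.hasLaw_fun_add (hA.fun_comp hX) (hB.fun_comp hW)
  rw [multivariateGaussian_conv_multivariateGaussian _ _ hAS hBR] at hsum
  exact hsum

end Law

/-- **The EnKF update map transports the prior to the Gaussian posterior.**
If `X̄ ~ N(m, Σ)` on `ℝ^n` and `W̄ ~ N(0, R)` on `ℝ^m` are independent, `Ȳ = H X̄ + W̄`
and `K = Σ Hᵀ (H Σ Hᵀ + R)⁻¹`, then for every `y` the law of `X̄ + K (y − Ȳ)` is
`N(m + K(y − Hm), Σ − Σ Hᵀ (H Σ Hᵀ + R)⁻¹ H Σ)`. -/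
theorem enkf_map_pushforward_gaussian {n p : ℕ} {Ω : Type*} [MeasurableSpace Ω]
    (P : Measure Ω) [IsProbabilityMeasure P]
    (Xb : Ω → Fin n → ℝ) (Wb : Ω → Fin p → ℝ)
    (hXbm : Measurable Xb) (hWbm : Measurable Wb)
    (m : Fin n → ℝ) (S : Matrix (Fin n) (Fin n) ℝ) (R : Matrix (Fin p) (Fin p) ℝ)
    (hS : S.PosDef) (hR : R.PosDef)
    (hXlaw : P.map Xb = mvGaussian m S) (hWlaw : P.map Wb = mvGaussian 0 R)
    (hindep : IndepFun Xb Wb P)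
    (H : Matrix (Fin p) (Fin n) ℝ)
    (Yb : Ω → Fin p → ℝ) (hYb : Yb = fun ω => H.mulVec (Xb ω) + Wb ω)
    (K : Matrix (Fin n) (Fin p) ℝ) (hK : K = S * Hᵀ * (H * S * Hᵀ + R)⁻¹)
    (y : Fin p → ℝ) :
    P.map (fun ω => Xb ω + K.mulVec (y - Yb ω))
      = mvGaussian (m + K.mulVec (y - H.mulVec m))
          (S - S * Hᵀ * (H * S * Hᵀ + R)⁻¹ * H * S) := by
  have hinnovation : (H * S * Hᵀ + R).PosDef := posDef_mul_mul_conjTranspose_add hS.posSemidef hR H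
  have hgain : K * (H * S * Hᵀ + R) = S * Hᵀ := by
    rw [hK, nonsing_inv_mul_cancel_right _ _ ((isUnit_iff_isUnit_det _).1 hinnovation.isUnit)]
  have hcov : (1 - K * H) * S * (1 - K * H)ᵀ + (-K) * R * (-K)ᵀ =
      S - S * Hᵀ * (H * S * Hᵀ + R)⁻¹ * H * S := by
    rw [transpose_neg, Matrix.neg_mul, Matrix.neg_mul, Matrix.mul_neg, neg_neg,
      one_sub_mul_mul_transpose_add_eq_sub hgain, hK]
  have hpos : ((1 - K * H) * S * (1 - K * H)ᵀ + (-K) * R * (-K)ᵀ).PosDef :=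
    hcov ▸ posDef_sub_mul_inv_mul hS hR H
  have hupdate (x : Fin n → ℝ) (w : Fin p → ℝ) :
      x + K *ᵥ (y - (H *ᵥ x + w)) = K *ᵥ y + (1 - K * H) *ᵥ x + (-K) *ᵥ w := by
    simp only [mulVec_sub, mulVec_add, sub_mulVec, one_mulVec, neg_mulVec, mulVec_mulVec]
    abel
  have hmean : m + K *ᵥ (y - H *ᵥ m) = K *ᵥ y + (1 - K * H) *ᵥ m + (-K) *ᵥ 0 := by
    rw [← hupdate, add_zero]
  simp only [hYb, hupdate]
  rw [hmean, ← hcov]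
  exact (hasLaw_const_add_mulVec_add_mulVec_mvGaussian ⟨hXbm.aemeasurable, hXlaw⟩
    ⟨hWbm.aemeasurable, hWlaw⟩ hindep hS hR _ _ _ hpos).map_eq
end

section
/- Let X be a random vector on ℝ^n with law P_X, let h : ℝ^n → ℝ be bounded and measurable with ĥ := E[h(X)], and for Δt > 0 let ΔW ~ N(0, Δt) be a scalar Gaussian independent of X, ΔY := h(X)Δt + ΔW, and let X̄ be an independent copy of X, independent of (X, ΔW). Let φ ∈ C³(ℝ^n) be bounded with bounded derivatives up to order three, ψ ∈ C²(ℝ^n) bounded with bounded derivatives up to order two, and κ, u : ℝ^n → ℝ^n bounded and measurable. Define f(x, y) := φ(x)y + ψ(x)Δt, T(x, y) := x + κ(x)y + u(x)Δt, the objective J(f,T) := E[f(X, ΔY)] + E[½|T(X̄, ΔY) − X̄|² − f(T(X̄, ΔY), ΔY)], and J₁(φ, κ) := E[½|κ(X) − ∇φ(X)|² − ½|∇φ(X)|² + φ(X)(h(X) − ĥ)]. Then there exist constants C > 0 and δ > 0 (depending on the bounds on φ, ψ, κ, u, h) such that for all Δt ∈ (0, δ]: |J(f, T) − J₁(φ,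 κ)·Δt| ≤ C·Δt². -/
open MeasureTheory ProbabilityTheory

/-!
Give the observation increment `y` weight one and the time step `t` weight two, so that `y⁴ + t²`
dominates every monomial of weight four. Taylor expansion of `φ` and `ψ` along the displacement
`y κ + t u` writes the transport cost, uniformly in the state, as
`(½|κ|² - Dφ κ) y² - φ y - t ψ`, plus multiples of `t y` and `y³` with bounded coefficients, plus
`O(y⁴ + t²)`. Since `X̄` is independent of `ΔY`, expectations factor into a bounded function of `X̄`
times a moment of `ΔY`, and `E ΔY = ĥ t`, `E ΔY² = t + O(t²)`, `E ΔY³ = O(t²)`, `E ΔY⁴ = O(t²)`.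
The two `ψ` terms cancel because `X̄` and `X` have the same law, and completing the square in
`½|κ|² - Dφ κ` gives the integrand of `J₁`.
-/

open Filter Asymptotics
open scoped Topology

section Moments

variable {Ω : Type*} [MeasurableSpace Ω] {P : Measure Ω}

/-- The asymptotics `𝔼[G t] = e * t + O(t ^ 2)` as `t → 0⁺` for a family `G t` of random variables,
including their integrability for small `t`. -/
structure HasFirstOrderMean (P : Measure Ω) (G : ℝ → Ω → ℝ) (e : ℝ) : Prop where
  eventually_integrable : ∀ᶠ t in 𝓝[>] 0, Integrable (G t) P
  isBigO : (fun t => (∫ ω, G t ω ∂P) - e * t) =O[𝓝[>] 0] fun t => t ^ 2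

namespace HasFirstOrderMean

variable {G G' D : ℝ → Ω → ℝ} {q : Ω → ℝ} {e e' : ℝ}

theorem congr (hG : HasFirstOrderMean P G e)
    (hGG' : ∀ t ω, G t ω = G' t ω) (he : e = e') : HasFirstOrderMean P G' e' := by
  obtain rfl : G = G' := funext₂ hGG'
  exact he ▸ hG

theorem add (hG : HasFirstOrderMean P G e) (hG' : HasFirstOrderMean P G' e') :
    HasFirstOrderMean P (fun t ω => G t ω + G' t ω) (e + e') where
  eventually_integrable := by
    filter_upwards [hG.eventually_integrable, hG'.eventually_integrable] with t ht ht'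
    exact ht.add ht'
  isBigO := by
    refine (hG.isBigO.add hG'.isBigO).congr' ?_ .rfl
    filter_upwards [hG.eventually_integrable, hG'.eventually_integrable] with t ht ht'
    rw [integral_add ht ht']
    ring

theorem const_mul (c : ℝ) (hG : HasFirstOrderMean P G e) :
    HasFirstOrderMean P (fun t ω => c * G t ω) (c * e) where
  eventually_integrable := hG.eventually_integrable.mono fun _ ht => ht.const_mul c
  isBigO := by
    refine (hG.isBigO.const_mul_left c).congr_left fun t => ?_
    rw [integral_const_mul]
    ring

theorem sub (hG : HasFirstOrderMean P G e) (hG' : HasFirstOrderMean P G' e') :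
    HasFirstOrderMean P (fun t ω => G t ω - G' t ω) (e - e') :=
  (hG.add (hG'.const_mul (-1))).congr (fun t ω => by ring) (by ring)

theorem mul_of_indepFun (hG : HasFirstOrderMean P G e) (hq : Integrable q P)
    (hind : ∀ t, IndepFun q (G t) P) :
    HasFirstOrderMean P (fun t ω => q ω * G t ω) ((∫ ω, q ω ∂P) * e) where
  eventually_integrable := hG.eventually_integrable.mono fun t ht => (hind t).integrable_mul hq ht
  isBigO := by
    refine (hG.isBigO.const_mul_left (∫ ω, q ω ∂P)).congr' ?_ .rfl
    filter_upwards [hG.eventually_integrable] with t ht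
    rw [(hind t).integral_fun_mul_eq_mul_integral hq.1 ht.1]
    ring

theorem of_integrable (hq : Integrable q P) :
    HasFirstOrderMean P (fun t ω => t * q ω) (∫ ω, q ω ∂P) where
  eventually_integrable := .of_forall fun t => hq.const_mul t
  isBigO := (isBigO_zero _ _).congr_left fun t => by rw [integral_const_mul]; ring

theorem time_mul (hG : HasFirstOrderMean P G e) :
    HasFirstOrderMean P (fun t ω => t * G t ω) 0 where
  eventually_integrable := hG.eventually_integrable.mono fun t ht => ht.const_mul t
  isBigO := by
    have htime : (fun t : ℝ => t) =O[𝓝[>] 0] fun _ => (1 : ℝ) :=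
      (tendsto_nhdsWithin_of_tendsto_nhds tendsto_id).isBigO_one ℝ
    have hmean : (fun t => t * ((∫ ω, G t ω ∂P) - e * t)) =O[𝓝[>] 0] fun t => t ^ 2 := by
      simpa only [one_mul] using htime.mul hG.isBigO
    refine (hmean.add ((isBigO_refl (fun t : ℝ => t ^ 2) _).const_mul_left e)).congr_left
      fun t => ?_
    rw [integral_const_mul]
    ring

theorem time_pow_succ_mul (hG : HasFirstOrderMean P G e) (j : ℕ) :
    HasFirstOrderMean P (fun t ω => t ^ (j + 1) * G t ω) 0 := by
  induction j with
  | zero => simpa only [zero_add, pow_one] using hG.time_mul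
  | succ j ih => simpa only [pow_succ' _ (j + 1), mul_assoc] using ih.time_mul

theorem of_isBigO (hD : HasFirstOrderMean P D 0) (hD0 : ∀ t ω, 0 ≤ D t ω)
    (hG : ∀ᶠ t in 𝓝[>] 0, AEStronglyMeasurable (G t) P)
    (hGD : (fun z : ℝ × Ω => G z.1 z.2) =O[𝓝[>] 0 ×ˢ ⊤] fun z => D z.1 z.2) :
    HasFirstOrderMean P G 0 := by
  obtain ⟨C, hC⟩ := hGD.bound
  have hbound : ∀ᶠ t in 𝓝[>] (0 : ℝ), ∀ ω, ‖G t ω‖ ≤ C * D t ω := by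
    filter_upwards [mem_prod_top.1 hC] with t ht ω
    simpa only [Real.norm_of_nonneg (hD0 t ω)] using ht ω
  refine ⟨?_, .trans (.of_bound C ?_) hD.isBigO⟩
  · filter_upwards [hD.eventually_integrable, hG, hbound] with t hDt hGt hle
    exact (hDt.const_mul C).mono' hGt (.of_forall hle)
  · filter_upwards [hD.eventually_integrable, hbound] with t hDt hle
    have hint := norm_integral_le_of_norm_le (hDt.const_mul C) (.of_forall hle)
    rw [integral_const_mul] at hint
    simpa only [zero_mul, sub_zero, Real.norm_of_nonneg (integral_nonneg (hD0 t))] using hint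

theorem of_sub_isBigO (hG' : HasFirstOrderMean P G' e) (hD : HasFirstOrderMean P D 0)
    (hD0 : ∀ t ω, 0 ≤ D t ω) (hG : ∀ t, AEStronglyMeasurable (G t) P)
    (hGG' : (fun z : ℝ × Ω => G z.1 z.2 - G' z.1 z.2) =O[𝓝[>] 0 ×ˢ ⊤] fun z => D z.1 z.2) :
    HasFirstOrderMean P G e := by
  have hdiff : HasFirstOrderMean P (fun t ω => G t ω - G' t ω) 0 :=
    hD.of_isBigO hD0 (hG'.eventually_integrable.mono fun t ht => (hG t).sub ht.1) hGG'
  exact (hG'.add hdiff).congr (fun t ω => by ring) (by ring)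

end HasFirstOrderMean

theorem exists_bound_of_isBigO_nhdsGT {f g : ℝ → ℝ} (hfg : f =O[𝓝[>] 0] g) :
    ∃ C > (0 : ℝ), ∃ δ > (0 : ℝ), ∀ t : ℝ, 0 < t → t ≤ δ → |f t| ≤ C * |g t| := by
  obtain ⟨C, hC, hfgC⟩ := hfg.exists_pos
  obtain ⟨δ, hδ, hIoc⟩ := mem_nhdsGT_iff_exists_Ioc_subset.1 hfgC.bound
  exact ⟨C, hC, δ, hδ, fun t ht htδ => hIoc ⟨ht, htδ⟩⟩

/-- The first four moments of `Y t`, up to `O(t ^ 2)`, are those of the increment over a time step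
`t` of a process with drift `m` and unit diffusion. -/
structure HasIncrementMoments (P : Measure Ω) (Y : ℝ → Ω → ℝ) (m : ℝ) : Prop where
  mean : HasFirstOrderMean P Y m
  sq : HasFirstOrderMean P (fun t ω => Y t ω ^ 2) 1
  cube : HasFirstOrderMean P (fun t ω => Y t ω ^ 3) 0
  fourth : HasFirstOrderMean P (fun t ω => Y t ω ^ 4) 0

theorem integral_pow_gaussianReal (v : NNReal) (k : ℕ) :
    ∫ x, x ^ k ∂gaussianReal 0 v = √v ^ k * ∫ x, x ^ k ∂gaussianReal 0 1 := by
  have hscale : (gaussianReal 0 1).map (√v * ·) = gaussianReal 0 v := by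
    rw [gaussianReal_map_const_mul, mul_zero]
    congr 1
    ext
    simp
  rw [← hscale, integral_map (by fun_prop) (by fun_prop), ← integral_const_mul]
  simp only [mul_pow]

theorem integral_odd_pow_gaussianReal (v : NNReal) {k : ℕ} (hk : Odd k) :
    ∫ x, x ^ k ∂gaussianReal 0 v = 0 := by
  have hsymm : ∫ x, x ^ k ∂gaussianReal 0 v = -∫ x, x ^ k ∂gaussianReal 0 v := by
    conv_lhs => rw [← neg_zero, ← gaussianReal_map_neg]
    rw [integral_map (by fun_prop) (by fun_prop), ← integral_neg]
    simp only [hk.neg_pow]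
  linarith

theorem integral_sq_gaussianReal (v : NNReal) : ∫ x, x ^ 2 ∂gaussianReal 0 v = v := by
  have hvar := variance_fun_id_gaussianReal (μ := 0) (v := v)
  rw [variance_eq_integral (by fun_prop)] at hvar
  simpa only [integral_id_gaussianReal, sub_zero] using hvar

theorem integrable_pow_gaussianReal (v : NNReal) (k : ℕ) :
    Integrable (fun x : ℝ => x ^ k) (gaussianReal 0 v) := by
  refine ((memLp_id_gaussianReal (μ := 0) (v := v) k).integrable_norm_pow').mono' (by fun_prop) ?_
  simp

theorem HasFirstOrderMean.pow_of_gaussian {W : ℝ → Ω → ℝ}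
    (hW : ∀ t, Measurable (W t))
    (hlaw : ∀ t, 0 < t → P.map (W t) = gaussianReal 0 t.toNNReal) {k : ℕ} {e : ℝ}
    (hk : (fun t : ℝ => (∫ x, x ^ k ∂gaussianReal 0 t.toNNReal) - e * t)
      =O[𝓝[>] 0] fun t => t ^ 2) :
    HasFirstOrderMean P (fun t ω => W t ω ^ k) e where
  eventually_integrable := by
    filter_upwards [self_mem_nhdsWithin] with t ht
    have hint := integrable_pow_gaussianReal t.toNNReal k
    rw [← hlaw t ht] at hint
    exact hint.comp_measurable (hW t)
  isBigO := by
    refine hk.congr' ?_ .rfl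
    filter_upwards [self_mem_nhdsWithin] with t ht
    rw [← hlaw t ht, integral_map (hW t).aemeasurable (by fun_prop)]

theorem integrable_pow_of_memLp [IsFiniteMeasure P] {H : Ω → ℝ} {k m : ℕ}
    (hH : MemLp H m P) (hkm : k ≤ m) :
    Integrable (fun ω => H ω ^ k) P := by
  have hHk : MemLp H k P := hH.mono_exponent (by exact_mod_cast hkm)
  refine hHk.integrable_norm_pow'.mono (hH.1.pow k) (.of_forall fun ω => ?_)
  simp

namespace HasIncrementMoments

variable {Y W : ℝ → Ω → ℝ} {H : Ω → ℝ} {m : ℝ}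

theorem mean_pow_one (hY : HasIncrementMoments P Y m) :
    HasFirstOrderMean P (fun t ω => Y t ω ^ 1) m := by
  simpa only [pow_one] using hY.mean

theorem of_gaussian (hW : ∀ t, Measurable (W t))
    (hlaw : ∀ t, 0 < t → P.map (W t) = gaussianReal 0 t.toNNReal) :
    HasIncrementMoments P W 0 where
  mean := by
    simpa only [pow_one] using HasFirstOrderMean.pow_of_gaussian (k := 1) hW hlaw
      ((isBigO_zero _ _).congr_left fun t => by simp [integral_id_gaussianReal])
  sq := by
    refine HasFirstOrderMean.pow_of_gaussian hW hlaw ((isBigO_zero _ _).congr' ?_ .rfl)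
    filter_upwards [self_mem_nhdsWithin] with t (ht : 0 < t)
    simp [integral_sq_gaussianReal, ht.le]
  cube := HasFirstOrderMean.pow_of_gaussian hW hlaw
    ((isBigO_zero _ _).congr_left fun t => by
      simp [integral_odd_pow_gaussianReal t.toNNReal (k := 3) (by decide)])
  fourth := by
    refine HasFirstOrderMean.pow_of_gaussian hW hlaw
      (((isBigO_refl (fun t : ℝ => t ^ 2) _).const_mul_left
        (∫ x, x ^ 4 ∂gaussianReal 0 1)).congr' ?_ .rfl)
    filter_upwards [self_mem_nhdsWithin] with t (ht : 0 < t)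
    have hsqrt : √t ^ 4 = t ^ 2 := by
      rw [show √t ^ 4 = (√t ^ 2) ^ 2 by ring, Real.sq_sqrt ht.le]
    rw [integral_pow_gaussianReal t.toNNReal, Real.coe_toNNReal _ ht.le, hsqrt]
    ring

theorem drift_add [IsFiniteMeasure P] (hW : HasIncrementMoments P W 0) (hH : MemLp H 4 P)
    (hind : ∀ t, IndepFun H (W t) P) :
    HasIncrementMoments P (fun t ω => H ω * t + W t ω) (∫ ω, H ω ∂P) := by
  have hH4 : MemLp H (4 : ℕ) P := by exact_mod_cast hH
  have hpow (k : ℕ) (hk : k ≤ 4) : Integrable (fun ω => H ω ^ k) P :=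
    integrable_pow_of_memLp hH4 hk
  have hcross (j : ℕ) {k : ℕ} {e : ℝ} (hj : j + 1 ≤ 4)
      (hWk : HasFirstOrderMean P (fun t ω => W t ω ^ k) e) :
      HasFirstOrderMean P (fun t ω => t ^ (j + 1) * (H ω ^ (j + 1) * W t ω ^ k)) 0 :=
    (hWk.mul_of_indepFun (hpow (j + 1) hj) fun t => (hind t).comp
      (measurable_id.pow_const (j + 1)) (measurable_id.pow_const k)).time_pow_succ_mul j
  have hdrift (j : ℕ) (hj : j + 2 ≤ 4) :
      HasFirstOrderMean P (fun t ω => t ^ (j + 1) * (t * H ω ^ (j + 2))) 0 :=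
    (HasFirstOrderMean.of_integrable (hpow (j + 2) hj)).time_pow_succ_mul j
  have hH : Integrable H P := by simpa only [pow_one] using hpow 1 (by decide)
  constructor
  · exact ((HasFirstOrderMean.of_integrable hH).add hW.mean).congr (fun t ω => by ring) (by ring)
  · exact ((hdrift 0 (by decide)).add <|
      ((hcross 0 (by decide) hW.mean_pow_one).const_mul 2).add hW.sq).congr
      (fun t ω => by ring) (by ring)
  · exact ((hdrift 1 (by decide)).add <|
      ((hcross 1 (by decide) hW.mean_pow_one).const_mul 3).add <|
      ((hcross 0 (by decide) hW.sq).const_mul 3).add hW.cube).congr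
      (fun t ω => by ring) (by ring)
  · exact ((hdrift 2 (by decide)).add <|
      ((hcross 2 (by decide) hW.mean_pow_one).const_mul 4).add <|
      ((hcross 1 (by decide) hW.sq).const_mul 6).add <|
      ((hcross 0 (by decide) hW.cube).const_mul 4).add hW.fourth).congr
      (fun t ω => by ring) (by ring)

end HasIncrementMoments

section Bounded

variable {S ι : Type*} [Fintype ι] {g g' : S → ι → ℝ} {l : Filter S} {M : ℝ}

theorem isBigO_one_of_abs_le (hg : ∀ x i, |g x i| ≤ M) : g =O[l] fun _ => (1 : ℝ) :=
  isBigO_pi.2 fun i => .of_bound M <| .of_forall fun x => by simpa using hg x i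

theorem isBigO_dotProduct (hg : g =O[l] fun _ => (1 : ℝ)) (hg' : g' =O[l] fun _ => (1 : ℝ)) :
    (fun x => g x ⬝ᵥ g' x) =O[l] fun _ => (1 : ℝ) :=
  .fun_sum fun i _ => by simpa only [mul_one] using (isBigO_pi.1 hg i).mul (isBigO_pi.1 hg' i)

variable [MeasurableSpace S]

theorem measurable_dotProduct (hg : Measurable g) (hg' : Measurable g') :
    Measurable fun x => g x ⬝ᵥ g' x :=
  Finset.measurable_fun_sum _ fun _ _ => hg.eval.mul hg'.eval

theorem measurable_clm_apply {E F : Type*}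
    [NormedAddCommGroup E] [NormedSpace ℝ E] [FiniteDimensional ℝ E]
    [MeasurableSpace E] [BorelSpace E]
    [NormedAddCommGroup F] [NormedSpace ℝ F] [FiniteDimensional ℝ F]
    [MeasurableSpace F] [BorelSpace F]
    {A : S → E →L[ℝ] F} {v : S → E} (hA : Measurable A) (hv : Measurable v) :
    Measurable fun x => A x (v x) :=
  isBoundedBilinearMap_apply.continuous.measurable.comp (hA.prodMk hv)

theorem integrable_comp_of_isBigO_one [IsFiniteMeasure P] {g : S → ℝ} {Z : Ω → S}
    (hg : Measurable g) (hgb : g =O[⊤] fun _ => (1 : ℝ)) (hZ : Measurable Z) :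
    Integrable (fun ω => g (Z ω)) P := by
  obtain ⟨C, hC⟩ := isBigO_top.1 hgb
  exact .of_bound (hg.comp hZ).aestronglyMeasurable C (.of_forall fun ω => by simpa using hC (Z ω))

theorem integrable_comp_mul_of_isBigO_one {g : S → ℝ} {Z : Ω → S} {q : Ω → ℝ}
    (hg : Measurable g) (hgb : g =O[⊤] fun _ => (1 : ℝ)) (hZ : Measurable Z)
    (hq : Integrable q P) : Integrable (fun ω => g (Z ω) * q ω) P := by
  obtain ⟨C, hC⟩ := isBigO_top.1 hgb
  exact hq.bdd_mul (hg.comp hZ).aestronglyMeasurable (.of_forall fun ω => by simpa using hC (Z ω))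

theorem HasFirstOrderMean.comp_mul_pow [IsFiniteMeasure P] {g : S → ℝ} {Z : Ω → S}
    {Y : ℝ → Ω → ℝ} {k : ℕ} {e : ℝ} (hY : HasFirstOrderMean P (fun t ω => Y t ω ^ k) e)
    (hg : Measurable g) (hgb : g =O[⊤] fun _ => (1 : ℝ)) (hZ : Measurable Z)
    (hind : ∀ t, IndepFun Z (Y t) P) :
    HasFirstOrderMean P (fun t ω => g (Z ω) * Y t ω ^ k) ((∫ ω, g (Z ω) ∂P) * e) :=
  hY.mul_of_indepFun (integrable_comp_of_isBigO_one hg hgb hZ) fun t =>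
    (hind t).comp hg (measurable_id.pow_const k)

end Bounded

end Moments

section UniformExpansion

variable {E F : Type*} [NormedAddCommGroup E] [NormedSpace ℝ E]
  [NormedAddCommGroup F] [NormedSpace ℝ F]

open Finset in
theorem norm_taylor_remainder_le [CompleteSpace F] {f : E → F} {n : ℕ} {M : ℝ}
    (hf : ContDiff ℝ (n + 1) f) (hM : ∀ z, ‖iteratedFDeriv ℝ (n + 1) f z‖ ≤ M) (x v : E) :
    ‖f (x + v) - ∑ k ∈ range (n + 1), (k.factorial : ℝ)⁻¹ • iteratedFDeriv ℝ k f x fun _ => v‖ ≤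
      M * ‖v‖ ^ (n + 1) := by
  rw [map_add_eq_sum_add_integral_iteratedFDeriv fun _ _ => hf.contDiffAt, add_sub_cancel_left,
    norm_smul]
  have hderiv (s : ℝ) (hs : s ∈ Set.uIoc (0 : ℝ) 1) :
      ‖(1 - s) ^ n • iteratedFDeriv ℝ (n + 1) f (x + s • v) fun _ => v‖ ≤ M * ‖v‖ ^ (n + 1) := by
    rw [Set.uIoc_of_le zero_le_one] at hs
    have hweight : ‖(1 - s) ^ n‖ ≤ 1 := by
      rw [norm_pow, Real.norm_of_nonneg (by linarith [hs.2])]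
      exact pow_le_one₀ (by linarith [hs.2]) (by linarith [hs.1])
    have happly := (iteratedFDeriv ℝ (n + 1) f (x + s • v)).le_of_opNorm_le (hM _) fun _ => v
    rw [norm_smul]
    simpa using mul_le_mul hweight happly (norm_nonneg _) zero_le_one
  have hint := intervalIntegral.norm_integral_le_of_norm_le_const hderiv
  have hfact : ‖(n.factorial : ℝ)⁻¹‖ ≤ 1 := by
    rw [norm_inv, Real.norm_natCast]
    exact inv_le_one_of_one_le₀ (by exact_mod_cast n.factorial_pos)
  simpa using mul_le_mul hfact hint (norm_nonneg _) zero_le_one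

variable {α : Type*} {l : Filter α}

theorem isBigO_clm_apply {A : α → E →L[ℝ] F} {v : α → E} {g : α → ℝ}
    (hA : A =O[l] fun _ => (1 : ℝ)) (hv : v =O[l] g) : (fun a => A a (v a)) =O[l] g :=
  (isBoundedBilinearMap_apply.isBigO_comp (g := A) (h := v)).trans <| by
    simpa only [one_mul] using hA.norm_left.mul hv.norm_left

section Derivatives

variable {f : E → F} {M : ℝ}

theorem isBigO_taylor_remainder_one [CompleteSpace F] (hf : ContDiff ℝ 2 f)
    (hM : ∀ z, ‖iteratedFDeriv ℝ 2 f z‖ ≤ M) (x v : α → E) :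
    (fun a => f (x a + v a) - (f (x a) + fderiv ℝ f (x a) (v a))) =O[l] fun a => ‖v a‖ ^ 2 :=
  .of_bound M <| .of_forall fun a => by
    simpa [Finset.sum_range_succ] using
      norm_taylor_remainder_le (n := 1) (mod_cast hf) hM (x a) (v a)

theorem isBigO_taylor_remainder_two [CompleteSpace F] (hf : ContDiff ℝ 3 f)
    (hM : ∀ z, ‖iteratedFDeriv ℝ 3 f z‖ ≤ M) (x v : α → E) :
    (fun a => f (x a + v a) - (f (x a) + fderiv ℝ f (x a) (v a) +
      (2⁻¹ : ℝ) • fderiv ℝ (fderiv ℝ f) (x a) (v a) (v a))) =O[l] fun a => ‖v a‖ ^ 3 :=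
  .of_bound M <| .of_forall fun a => by
    simpa [Finset.sum_range_succ, iteratedFDeriv_two_apply] using
      norm_taylor_remainder_le (n := 2) (mod_cast hf) hM (x a) (v a)

theorem isBigO_one_of_norm_iteratedFDeriv_le {l : Filter E}
    (hM : ∀ z, ‖iteratedFDeriv ℝ 0 f z‖ ≤ M) : f =O[l] fun _ => (1 : ℝ) :=
  .of_bound M <| .of_forall fun z => by simpa using hM z

theorem isBigO_fderiv_one (hM : ∀ z, ‖iteratedFDeriv ℝ 1 f z‖ ≤ M) (x : α → E) :
    (fun a => fderiv ℝ f (x a)) =O[l] fun _ => (1 : ℝ) :=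
  .of_bound M <| .of_forall fun a => by simpa [norm_iteratedFDeriv_one] using hM (x a)

theorem isBigO_fderiv_fderiv_one (hM : ∀ z, ‖iteratedFDeriv ℝ 2 f z‖ ≤ M)
    (x : α → E) :
    (fun a => fderiv ℝ (fderiv ℝ f) (x a)) =O[l] fun _ => (1 : ℝ) :=
  .of_bound M <| .of_forall fun a => by
    simpa [← norm_iteratedFDeriv_one, norm_iteratedFDeriv_fderiv] using hM (x a)

end Derivatives

variable {t y : α → ℝ} {x k u : α → E} {f : E → ℝ} {M : ℝ}

theorem isBigO_time_sq : (fun a => t a ^ 2) =O[l] fun a => y a ^ 4 + t a ^ 2 :=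
  .of_norm_eventuallyLE <| .of_forall fun a => by
    simp only [norm_pow, Real.norm_eq_abs, sq_abs]
    exact le_add_of_nonneg_left (by positivity)

theorem isBigO_pow_four_abs_add_time (ht : Tendsto t l (𝓝[>] 0)) :
    (fun a => (|y a| + t a) ^ 4) =O[l] fun a => y a ^ 4 + t a ^ 2 := by
  refine .trans (.of_norm_eventuallyLE ?_) (isBigO_const_mul_self 8 _ l)
  filter_upwards [ht.eventually (Ioc_mem_nhdsGT zero_lt_one)] with a ⟨hpos, hle⟩
  rw [Real.norm_of_nonneg (by positivity)]
  have hpow : t a ^ 4 ≤ t a ^ 2 := pow_le_pow_of_le_one hpos.le hle (by norm_num)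
  have hconvex := add_pow_le (abs_nonneg (y a)) hpos.le 4
  rw [Even.pow_abs (by decide)] at hconvex
  norm_num at hconvex
  linarith

theorem isBigO_time_mul_sq_abs_add_time (ht : Tendsto t l (𝓝[>] 0)) :
    (fun a => t a * (|y a| + t a) ^ 2) =O[l] fun a => y a ^ 4 + t a ^ 2 := by
  refine .trans (.of_norm_eventuallyLE ?_)
    ((isBigO_time_sq (t := t) (y := y)).add (isBigO_pow_four_abs_add_time ht))
  filter_upwards [ht.eventually self_mem_nhdsWithin] with a (hpos : 0 < t a)
  rw [Real.norm_of_nonneg (by positivity)]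
  nlinarith [sq_nonneg (t a - (|y a| + t a) ^ 2)]

theorem isBigO_abs_add_time_left (ht : Tendsto t l (𝓝[>] 0)) : y =O[l] fun a => |y a| + t a := by
  refine .of_norm_eventuallyLE ?_
  filter_upwards [ht.eventually self_mem_nhdsWithin] with a (hpos : 0 < t a)
  exact le_add_of_nonneg_right hpos.le

theorem isBigO_abs_add_time_right (ht : Tendsto t l (𝓝[>] 0)) : t =O[l] fun a => |y a| + t a := by
  refine .of_norm_eventuallyLE ?_
  filter_upwards [ht.eventually self_mem_nhdsWithin] with a (hpos : 0 < t a)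
  rw [Real.norm_of_nonneg hpos.le]
  exact le_add_of_nonneg_left (abs_nonneg _)

theorem isBigO_displacement (ht : Tendsto t l (𝓝[>] 0)) (hk : k =O[l] fun _ => (1 : ℝ))
    (hu : u =O[l] fun _ => (1 : ℝ)) :
    (fun a => y a • k a + t a • u a) =O[l] fun a => |y a| + t a := by
  simpa only [smul_eq_mul, mul_one] using
    ((isBigO_abs_add_time_left ht).smul hk).add ((isBigO_abs_add_time_right (y := y) ht).smul hu)

theorem isBigO_time_mul_displaced_sub (hf : ContDiff ℝ 2 f)
    (hM : ∀ j ≤ 2, ∀ z, ‖iteratedFDeriv ℝ j f z‖ ≤ M) (ht : Tendsto t l (𝓝[>] 0))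
    (hk : k =O[l] fun _ => (1 : ℝ)) (hu : u =O[l] fun _ => (1 : ℝ)) :
    (fun a => t a * f (x a + (y a • k a + t a • u a)) -
      (t a * f (x a) + t a * y a * fderiv ℝ f (x a) (k a))) =O[l] fun a => y a ^ 4 + t a ^ 2 := by
  have hv := isBigO_displacement (y := y) ht hk hu
  have hrem := ((isBigO_refl t l).mul <|
    (isBigO_taylor_remainder_one hf (hM 2 le_rfl) x _).trans (hv.norm_left.pow 2)).trans
    (isBigO_time_mul_sq_abs_add_time ht)
  have hdrift : (fun a => t a ^ 2 * fderiv ℝ f (x a) (u a)) =O[l] fun a => y a ^ 4 + t a ^ 2 := by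
    simpa only [mul_one] using (isBigO_time_sq (t := t) (y := y) (l := l)).mul
      (isBigO_clm_apply (isBigO_fderiv_one (hM 1 one_le_two) x) hu)
  refine (hrem.add hdrift).congr_left fun a => ?_
  simp only [map_add, map_smul, smul_eq_mul]
  ring

theorem isBigO_observation_mul_displaced_sub (hf : ContDiff ℝ 3 f)
    (hM : ∀ j ≤ 3, ∀ z, ‖iteratedFDeriv ℝ j f z‖ ≤ M) (ht : Tendsto t l (𝓝[>] 0))
    (hk : k =O[l] fun _ => (1 : ℝ)) (hu : u =O[l] fun _ => (1 : ℝ)) :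
    (fun a => y a * f (x a + (y a • k a + t a • u a)) -
      (y a * f (x a) + y a ^ 2 * fderiv ℝ f (x a) (k a) + t a * y a * fderiv ℝ f (x a) (u a) +
        y a ^ 3 * (2⁻¹ * fderiv ℝ (fderiv ℝ f) (x a) (k a) (k a))))
      =O[l] fun a => y a ^ 4 + t a ^ 2 := by
  have hy := isBigO_abs_add_time_left (y := y) ht
  have hv := isBigO_displacement (y := y) ht hk hu
  have hrem := (hy.mul <|
    (isBigO_taylor_remainder_two hf (hM 3 le_rfl) x _).trans (hv.norm_left.pow 3)).trans
    ((isBigO_pow_four_abs_add_time ht).congr_left fun a => pow_succ' _ 3)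
  have hD := isBigO_fderiv_fderiv_one (l := l) (hM 2 (by norm_num)) x
  have hDuv := isBigO_clm_apply (isBigO_clm_apply hD hu) hv
  have hDku : (fun a => y a * fderiv ℝ (fderiv ℝ f) (x a) (k a) (u a))
      =O[l] fun a => |y a| + t a := by
    simpa only [mul_one] using hy.mul (isBigO_clm_apply (isBigO_clm_apply hD hk) hu)
  have hcross := ((isBigO_refl t l).mul (hy.mul (hDuv.add hDku))).trans <|
    (isBigO_time_mul_sq_abs_add_time (y := y) ht).congr_left fun a => by rw [pow_two]
  refine (hrem.add (hcross.const_mul_left 2⁻¹)).congr_left fun a => ?_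
  simp only [map_add, map_smul, smul_eq_mul, add_apply, smul_apply]
  ring

end UniformExpansion

section Objective

variable {Ω : Type*} [MeasurableSpace Ω] {P : Measure Ω}
variable {ι : Type*} [Fintype ι]

/-- The test function `f(x, y) = φ(x) y + ψ(x) t` of the max-min problem. -/
def testFunction {E : Type*} (φ ψ : E → ℝ) (t : ℝ) (x : E) (y : ℝ) : ℝ :=
  φ x * y + ψ x * t

/-- The transport map `T(x, y) = x + κ(x) y + u(x) t` of the max-min problem. -/
def transportMap {E : Type*} [AddCommGroup E] [Module ℝ E] (κ u : E → E) (t : ℝ) (x : E) (y : ℝ) :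
    E :=
  x + y • κ x + t • u x

/-- The transport part `½|T(x, y) - x|² - f(T(x, y), y)` of the max-min objective. -/
noncomputable def transportCost (φ ψ : (ι → ℝ) → ℝ) (κ u : (ι → ℝ) → ι → ℝ) (t : ℝ)
    (x : ι → ℝ) (y : ℝ) : ℝ :=
  (1 / 2) * ∑ i, (κ x i * y + u x i * t) ^ 2 -
    testFunction φ ψ t (transportMap κ u t x y) y

/-- The coefficient of `y ^ 2` in the expansion of `transportCost`. -/
noncomputable def quadraticCoeff (φ : (ι → ℝ) → ℝ) (κ : (ι → ℝ) → ι → ℝ) (x : ι → ℝ) : ℝ :=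
  (1 / 2) * (κ x ⬝ᵥ κ x) - fderiv ℝ φ x (κ x)

/-- The coefficient of `t * y` in the expansion of `transportCost`. -/
noncomputable def mixedCoeff (φ ψ : (ι → ℝ) → ℝ) (κ u : (ι → ℝ) → ι → ℝ) (x : ι → ℝ) : ℝ :=
  κ x ⬝ᵥ u x - fderiv ℝ φ x (u x) - fderiv ℝ ψ x (κ x)

/-- The coefficient of `y ^ 3` in the expansion of `transportCost`. -/
noncomputable def cubicCoeff (φ : (ι → ℝ) → ℝ) (κ : (ι → ℝ) → ι → ℝ) (x : ι → ℝ) : ℝ :=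
  -(2⁻¹ * fderiv ℝ (fderiv ℝ φ) x (κ x) (κ x))

variable {φ ψ : (ι → ℝ) → ℝ} {κ u : (ι → ℝ) → ι → ℝ} {Mφ Mψ : ℝ}

theorem isBigO_transportCost_sub {α : Type*} {l : Filter α} {t y : α → ℝ}
    (hφ : ContDiff ℝ 3 φ) (hφb : ∀ j ≤ 3, ∀ z, ‖iteratedFDeriv ℝ j φ z‖ ≤ Mφ)
    (hψ : ContDiff ℝ 2 ψ) (hψb : ∀ j ≤ 2, ∀ z, ‖iteratedFDeriv ℝ j ψ z‖ ≤ Mψ)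
    (hκ : κ =O[⊤] fun _ => (1 : ℝ)) (hu : u =O[⊤] fun _ => (1 : ℝ))
    (ht : Tendsto t l (𝓝[>] 0)) (x : α → ι → ℝ) :
    (fun a => transportCost φ ψ κ u (t a) (x a) (y a) -
      (quadraticCoeff φ κ (x a) * y a ^ 2 - φ (x a) * y a - t a * ψ (x a) +
        t a * (mixedCoeff φ ψ κ u (x a) * y a) + cubicCoeff φ κ (x a) * y a ^ 3))
      =O[l] fun a => y a ^ 4 + t a ^ 2 := by
  have hκx : (fun a => κ (x a)) =O[l] fun _ => (1 : ℝ) := hκ.comp_tendsto tendsto_top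
  have hux : (fun a => u (x a)) =O[l] fun _ => (1 : ℝ) := hu.comp_tendsto tendsto_top
  have hcost : (fun a => t a ^ 2 * (u (x a) ⬝ᵥ u (x a))) =O[l] fun a => y a ^ 4 + t a ^ 2 := by
    simpa only [mul_one] using
      (isBigO_time_sq (t := t) (y := y) (l := l)).mul (isBigO_dotProduct hux hux)
  have hφ_exp := isBigO_observation_mul_displaced_sub (y := y) (x := x) hφ hφb ht hκx hux
  have hψ_exp := isBigO_time_mul_displaced_sub (y := y) (x := x) hψ hψb ht hκx hux
  refine (((hcost.const_mul_left 2⁻¹).sub hφ_exp).sub hψ_exp).congr_left fun a => ?_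
  have hsquare : (1 / 2) * ∑ i, (κ (x a) i * y a + u (x a) i * t a) ^ 2 =
      2⁻¹ * (κ (x a) ⬝ᵥ κ (x a)) * y a ^ 2 + κ (x a) ⬝ᵥ u (x a) * (t a * y a) +
        2⁻¹ * (t a ^ 2 * (u (x a) ⬝ᵥ u (x a))) := by
    simp only [dotProduct, Finset.mul_sum, Finset.sum_mul, ← Finset.sum_add_distrib]
    exact Finset.sum_congr rfl fun i _ => by ring
  simp only [transportCost, testFunction, transportMap, quadraticCoeff, mixedCoeff, cubicCoeff,
    hsquare, add_assoc]
  ring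

theorem measurable_quadraticCoeff (hφ : ContDiff ℝ 1 φ) (hκ : Measurable κ) :
    Measurable (quadraticCoeff φ κ) :=
  ((measurable_dotProduct hκ hκ).const_mul _).sub
    (measurable_clm_apply (hφ.continuous_fderiv one_ne_zero).measurable hκ)

theorem measurable_mixedCoeff (hφ : ContDiff ℝ 1 φ) (hψ : ContDiff ℝ 1 ψ) (hκ : Measurable κ)
    (hu : Measurable u) : Measurable (mixedCoeff φ ψ κ u) :=
  ((measurable_dotProduct hκ hu).sub
    (measurable_clm_apply (hφ.continuous_fderiv one_ne_zero).measurable hu)).sub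
    (measurable_clm_apply (hψ.continuous_fderiv one_ne_zero).measurable hκ)

theorem measurable_cubicCoeff (hφ : ContDiff ℝ 2 φ) (hκ : Measurable κ) :
    Measurable (cubicCoeff φ κ) := by
  have hD : ContDiff ℝ 1 (fderiv ℝ φ) := hφ.fderiv_right (by norm_num)
  exact ((measurable_clm_apply (measurable_clm_apply
    (hD.continuous_fderiv one_ne_zero).measurable hκ) hκ).const_mul _).neg

theorem isBigO_quadraticCoeff_one (hφb : ∀ z, ‖iteratedFDeriv ℝ 1 φ z‖ ≤ Mφ)
    (hκ : κ =O[⊤] fun _ => (1 : ℝ)) : quadraticCoeff φ κ =O[⊤] fun _ => (1 : ℝ) :=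
  ((isBigO_dotProduct hκ hκ).const_mul_left _).sub
    (isBigO_clm_apply (isBigO_fderiv_one hφb id) hκ)

theorem isBigO_mixedCoeff_one (hφb : ∀ z, ‖iteratedFDeriv ℝ 1 φ z‖ ≤ Mφ)
    (hψb : ∀ z, ‖iteratedFDeriv ℝ 1 ψ z‖ ≤ Mψ) (hκ : κ =O[⊤] fun _ => (1 : ℝ))
    (hu : u =O[⊤] fun _ => (1 : ℝ)) : mixedCoeff φ ψ κ u =O[⊤] fun _ => (1 : ℝ) :=
  ((isBigO_dotProduct hκ hu).sub (isBigO_clm_apply (isBigO_fderiv_one hφb id) hu)).sub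
    (isBigO_clm_apply (isBigO_fderiv_one hψb id) hκ)

theorem isBigO_cubicCoeff_one (hφb : ∀ z, ‖iteratedFDeriv ℝ 2 φ z‖ ≤ Mφ)
    (hκ : κ =O[⊤] fun _ => (1 : ℝ)) : cubicCoeff φ κ =O[⊤] fun _ => (1 : ℝ) :=
  ((isBigO_clm_apply (isBigO_clm_apply (isBigO_fderiv_fderiv_one hφb id) hκ)
    hκ).const_mul_left _).neg_left

theorem measurable_transportCost (hφ : Measurable φ) (hψ : Measurable ψ) (hκ : Measurable κ)
    (hu : Measurable u) (t : ℝ) :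
    Measurable fun z : (ι → ℝ) × ℝ => transportCost φ ψ κ u t z.1 z.2 := by
  unfold transportCost testFunction transportMap
  fun_prop

theorem hasFirstOrderMean_transportCost [IsFiniteMeasure P] {Xb : Ω → ι → ℝ} {Y : ℝ → Ω → ℝ}
    {m : ℝ} (hφ : ContDiff ℝ 3 φ) (hφb : ∀ j ≤ 3, ∀ z, ‖iteratedFDeriv ℝ j φ z‖ ≤ Mφ)
    (hψ : ContDiff ℝ 2 ψ) (hψb : ∀ j ≤ 2, ∀ z, ‖iteratedFDeriv ℝ j ψ z‖ ≤ Mψ)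
    (hκm : Measurable κ) (hκ : κ =O[⊤] fun _ => (1 : ℝ))
    (hum : Measurable u) (hu : u =O[⊤] fun _ => (1 : ℝ))
    (hXb : Measurable Xb) (hYm : ∀ t, Measurable (Y t)) (hY : HasIncrementMoments P Y m)
    (hind : ∀ t, IndepFun Xb (Y t) P) :
    HasFirstOrderMean P (fun t ω => transportCost φ ψ κ u t (Xb ω) (Y t ω))
      ((∫ ω, quadraticCoeff φ κ (Xb ω) ∂P) - (∫ ω, φ (Xb ω) ∂P) * m - ∫ ω, ψ (Xb ω) ∂P) := by
  have hφ1 : ContDiff ℝ 1 φ := hφ.of_le (by norm_num)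
  have hφm := hφ.continuous.measurable
  have hψm := hψ.continuous.measurable
  have hquad := hY.sq.comp_mul_pow (measurable_quadraticCoeff hφ1 hκm)
    (isBigO_quadraticCoeff_one (hφb 1 (by norm_num)) hκ) hXb hind
  have hmixed := (hY.mean_pow_one.comp_mul_pow
    (measurable_mixedCoeff hφ1 (hψ.of_le one_le_two) hκm hum)
    (isBigO_mixedCoeff_one (hφb 1 (by norm_num)) (hψb 1 one_le_two) hκ hu) hXb hind).time_mul
  have hcubic := hY.cube.comp_mul_pow (measurable_cubicCoeff (hφ.of_le (by norm_num)) hκm)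
    (isBigO_cubicCoeff_one (hφb 2 (by norm_num)) hκ) hXb hind
  have hφmean := hY.mean_pow_one.comp_mul_pow hφm
    (isBigO_one_of_norm_iteratedFDeriv_le (hφb 0 (by norm_num))) hXb hind
  have hψmean : HasFirstOrderMean P (fun t ω => t * ψ (Xb ω)) _ :=
    .of_integrable (integrable_comp_of_isBigO_one hψm
      (isBigO_one_of_norm_iteratedFDeriv_le (hψb 0 zero_le_two)) hXb)
  have hpoly := (((hquad.sub hφmean).sub hψmean).add hmixed).add hcubic
  have hone : HasFirstOrderMean P (fun t _ => t * 1) _ := .of_integrable (integrable_const 1)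
  have hdom : HasFirstOrderMean P (fun t ω => Y t ω ^ 4 + t ^ 2) 0 :=
    (hY.fourth.add hone.time_mul).congr (fun t ω => by ring) (by ring)
  have hcost_meas (t : ℝ) :
      AEStronglyMeasurable (fun ω => transportCost φ ψ κ u t (Xb ω) (Y t ω)) P :=
    ((measurable_transportCost hφm hψm hκm hum t).comp
      (hXb.prodMk (hYm t))).aestronglyMeasurable
  have hexp := isBigO_transportCost_sub (l := 𝓝[>] 0 ×ˢ (⊤ : Filter Ω)) (y := fun z => Y z.1 z.2)
    hφ hφb hψ hψb hκ hu tendsto_fst fun z => Xb z.2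
  refine (hpoly.of_sub_isBigO hdom (fun t ω => by positivity) hcost_meas ?_).congr
    (fun t ω => rfl) (by ring)
  simpa only [pow_one] using hexp

theorem hasFirstOrderMean_testFunction [IsFiniteMeasure P] {S : Type*} [MeasurableSpace S]
    {φ ψ h : S → ℝ} {X : Ω → S} {W : ℝ → Ω → ℝ}
    (hφm : Measurable φ) (hφ : φ =O[⊤] fun _ => (1 : ℝ))
    (hψm : Measurable ψ) (hψ : ψ =O[⊤] fun _ => (1 : ℝ))
    (hX : Measurable X) (hh : Integrable (fun ω => h (X ω)) P)
    (hW : HasFirstOrderMean P W 0) (hind : ∀ t, IndepFun X (W t) P) :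
    HasFirstOrderMean P (fun t ω => testFunction φ ψ t (X ω) (h (X ω) * t + W t ω))
      ((∫ ω, φ (X ω) * h (X ω) ∂P) + ∫ ω, ψ (X ω) ∂P) := by
  have hdrift : HasFirstOrderMean P (fun t ω => t * (φ (X ω) * h (X ω))) _ :=
    .of_integrable (integrable_comp_mul_of_isBigO_one hφm hφ hX hh)
  have hnoise := hW.mul_of_indepFun (integrable_comp_of_isBigO_one hφm hφ hX) fun t =>
    (hind t).comp hφm measurable_id
  have hψmean : HasFirstOrderMean P (fun t ω => t * ψ (X ω)) _ :=
    .of_integrable (integrable_comp_of_isBigO_one hψm hψ hX)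
  refine ((hdrift.add hnoise).add hψmean).congr (fun t ω => ?_) (by ring)
  simp only [testFunction]
  ring

/-- The max-min objective `J(f, T)` for an observation increment `Y`, where `X` is the state and
`Xb` its independent copy. -/
noncomputable def maxMinObjective (P : Measure Ω) (X Xb : Ω → ι → ℝ) (Y : Ω → ℝ)
    (φ ψ : (ι → ℝ) → ℝ) (κ u : (ι → ℝ) → ι → ℝ) (t : ℝ) : ℝ :=
  (∫ ω, testFunction φ ψ t (X ω) (Y ω) ∂P) + ∫ ω, transportCost φ ψ κ u t (Xb ω) (Y ω) ∂P

/-- The leading coefficient `J₁(φ, κ) = E[½|κ - ∇φ|² - ½|∇φ|² + φ(h - ĥ)]` of the max-min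
objective, the integrand being evaluated at `X`. -/
noncomputable def leadingObjective [DecidableEq ι] (P : Measure Ω) (X : Ω → ι → ℝ)
    (h φ : (ι → ℝ) → ℝ) (κ : (ι → ℝ) → ι → ℝ) : ℝ :=
  ∫ ω, ((1 / 2) * ∑ i, (κ (X ω) i - fderiv ℝ φ (X ω) (Pi.single i 1)) ^ 2 -
    (1 / 2) * ∑ i, fderiv ℝ φ (X ω) (Pi.single i 1) ^ 2 +
    φ (X ω) * (h (X ω) - ∫ ω', h (X ω') ∂P)) ∂P

theorem quadraticCoeff_eq [DecidableEq ι] (φ : (ι → ℝ) → ℝ) (κ : (ι → ℝ) → ι → ℝ) (x : ι → ℝ) :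
    quadraticCoeff φ κ x = (1 / 2) * ∑ i, (κ x i - fderiv ℝ φ x (Pi.single i 1)) ^ 2 -
      (1 / 2) * ∑ i, fderiv ℝ φ x (Pi.single i 1) ^ 2 := by
  have hcoord : fderiv ℝ φ x (κ x) = ∑ i, κ x i * fderiv ℝ φ x (Pi.single i 1) := by
    conv_lhs => rw [pi_eq_sum_univ' (κ x)]
    simp only [map_sum, map_smul, smul_eq_mul]
  simp only [quadraticCoeff, hcoord, dotProduct, Finset.mul_sum, ← Finset.sum_sub_distrib]
  exact Finset.sum_congr rfl fun i _ => by ring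

theorem leadingObjective_eq [IsFiniteMeasure P] [DecidableEq ι] {X : Ω → ι → ℝ} {h : (ι → ℝ) → ℝ}
    (hφ : ContDiff ℝ 1 φ) (hφb : ∀ j ≤ 1, ∀ z, ‖iteratedFDeriv ℝ j φ z‖ ≤ Mφ)
    (hκm : Measurable κ) (hκ : κ =O[⊤] fun _ => (1 : ℝ))
    (hX : Measurable X) (hh : Integrable (fun ω => h (X ω)) P) :
    leadingObjective P X h φ κ = (∫ ω, quadraticCoeff φ κ (X ω) ∂P) +
      (∫ ω, φ (X ω) * h (X ω) ∂P) - (∫ ω, φ (X ω) ∂P) * ∫ ω, h (X ω) ∂P := by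
  have hφO := isBigO_one_of_norm_iteratedFDeriv_le (l := ⊤) (hφb 0 zero_le_one)
  have hφm := hφ.continuous.measurable
  have hquad := integrable_comp_of_isBigO_one (P := P) (measurable_quadraticCoeff hφ hκm)
    (isBigO_quadraticCoeff_one (hφb 1 le_rfl) hκ) hX
  have hφh := integrable_comp_mul_of_isBigO_one hφm hφO hX hh
  have hφhat := (integrable_comp_of_isBigO_one (P := P) hφm hφO hX).mul_const (∫ ω, h (X ω) ∂P)
  simp only [leadingObjective, ← quadraticCoeff_eq, mul_sub, ← add_sub_assoc]
  rw [integral_sub (hquad.fun_add hφh) hφhat, integral_add hquad hφh, integral_mul_const]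

end Objective

theorem fpf_objective_expansion_general {ι Ω : Type*} [Fintype ι] [DecidableEq ι]
    [MeasurableSpace Ω] (P : Measure Ω) [IsProbabilityMeasure P]
    (X : Ω → ι → ℝ) (hX : Measurable X)
    (h : (ι → ℝ) → ℝ) (hhm : Measurable h) (hh : MemLp (fun ω => h (X ω)) 4 P)
    (W : ℝ → Ω → ℝ) (hWm : ∀ t, Measurable (W t)) (hW : HasIncrementMoments P W 0)
    (hWind : ∀ t, IndepFun X (W t) P)
    (Xb : Ω → ι → ℝ) (hXb : Measurable Xb) (hXblaw : P.map Xb = P.map X)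
    (hXbind : ∀ t, IndepFun Xb (fun ω => (X ω, W t ω)) P)
    (φ : (ι → ℝ) → ℝ) (hφ : ContDiff ℝ 3 φ)
    (Mφ : ℝ) (hφb : ∀ k ≤ 3, ∀ x, ‖iteratedFDeriv ℝ k φ x‖ ≤ Mφ)
    (ψ : (ι → ℝ) → ℝ) (hψ : ContDiff ℝ 2 ψ)
    (Mψ : ℝ) (hψb : ∀ k ≤ 2, ∀ x, ‖iteratedFDeriv ℝ k ψ x‖ ≤ Mψ)
    (κ u : (ι → ℝ) → ι → ℝ) (hκm : Measurable κ) (hum : Measurable u)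
    (Mκ Mu : ℝ) (hκb : ∀ x i, |κ x i| ≤ Mκ) (hub : ∀ x i, |u x i| ≤ Mu) :
    ∃ C > (0 : ℝ), ∃ δ > (0 : ℝ), ∀ t : ℝ, 0 < t → t ≤ δ →
      |maxMinObjective P X Xb (fun ω => h (X ω) * t + W t ω) φ ψ κ u t -
        leadingObjective P X h φ κ * t| ≤ C * t ^ 2 := by
  have hκ : κ =O[⊤] fun _ => (1 : ℝ) := isBigO_one_of_abs_le hκb
  have hφO := isBigO_one_of_norm_iteratedFDeriv_le (l := ⊤) (hφb 0 (by norm_num))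
  have hψO := isBigO_one_of_norm_iteratedFDeriv_le (l := ⊤) (hψb 0 (by norm_num))
  have hφm := hφ.continuous.measurable
  have hψm := hψ.continuous.measurable
  have hhX : Integrable (fun ω => h (X ω)) P := hh.integrable (by norm_num)
  have hYm (t : ℝ) : Measurable fun ω => h (X ω) * t + W t ω :=
    ((hhm.comp hX).mul_const t).add (hWm t)
  have hYind (t : ℝ) : IndepFun Xb (fun ω => h (X ω) * t + W t ω) P :=
    (hXbind t).comp measurable_id
      (((hhm.comp measurable_fst).mul_const t).add measurable_snd)
  have hY := hW.drift_add hh fun t => (hWind t).comp hhm measurable_id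
  have htest := hasFirstOrderMean_testFunction hφm hφO hψm hψO hX hhX hW.mean hWind
  have hcost := hasFirstOrderMean_transportCost hφ hφb hψ hψb hκm hκ hum
    (isBigO_one_of_abs_le hub) hXb hYm hY hYind
  have hcopy {g : (ι → ℝ) → ℝ} (hg : Measurable g) : ∫ ω, g (Xb ω) ∂P = ∫ ω, g (X ω) ∂P :=
    (IdentDistrib.mk hXb.aemeasurable hX.aemeasurable hXblaw).comp hg |>.integral_eq
  have hφ1 : ContDiff ℝ 1 φ := hφ.of_le (by norm_num)
  rw [hcopy (measurable_quadraticCoeff hφ1 hκm), hcopy hφm, hcopy hψm] at hcost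
  have hJ : (fun t => maxMinObjective P X Xb (fun ω => h (X ω) * t + W t ω) φ ψ κ u t -
      leadingObjective P X h φ κ * t) =O[𝓝[>] 0] fun t => t ^ 2 := by
    refine (htest.isBigO.add hcost.isBigO).congr_left fun t => ?_
    rw [maxMinObjective, leadingObjective_eq hφ1 (fun j hj => hφb j (by omega)) hκm hκ hX hhX]
    ring
  simpa only [abs_pow, sq_abs] using exists_bound_of_isBigO_nhdsGT hJ

/-- **Leading-order expansion of the OT max-min objective for the FPF.**
For the time-discretized observation model `ΔY = h(X)Δt + ΔW` with `ΔW ~ N(0, Δt)`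
independent of `X`, the independent copy `X̄` of `X`, the test function
`f(x, y) = φ(x) y + ψ(x) Δt` and the map `T(x, y) = x + κ(x) y + u(x) Δt`, the
max-min objective satisfies `|J(f, T) − J₁(φ, κ) Δt| ≤ C Δt²` for all sufficiently
small `Δt > 0`, where
`J₁(φ, κ) = E[½|κ(X) − ∇φ(X)|² − ½|∇φ(X)|² + φ(X)(h(X) − ĥ)]`. -/
theorem fpf_objective_expansion {n : ℕ} {Ω : Type*} [MeasurableSpace Ω]
    (P : Measure Ω) [IsProbabilityMeasure P]
    (X : Ω → Fin n → ℝ) (hXm : Measurable X)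
    (h : (Fin n → ℝ) → ℝ) (hhm : Measurable h)
    (Mh : ℝ) (hhb : ∀ x, |h x| ≤ Mh)
    (hhat : ℝ) (hhat_def : hhat = ∫ ω, h (X ω) ∂P)
    (ΔW : ℝ → Ω → ℝ) (hΔWm : ∀ t, Measurable (ΔW t))
    (hΔWlaw : ∀ t, 0 < t → P.map (ΔW t) = gaussianReal 0 (Real.toNNReal t))
    (hΔWind : ∀ t, IndepFun X (ΔW t) P)
    (Xb : Ω → Fin n → ℝ) (hXbm : Measurable Xb) (hXblaw : P.map Xb = P.map X)
    (hXbind : ∀ t, IndepFun Xb (fun ω => (X ω, ΔW t ω)) P)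
    (φ : (Fin n → ℝ) → ℝ) (hφ : ContDiff ℝ 3 φ)
    (Mφ : ℝ) (hφb : ∀ k : ℕ, k ≤ 3 → ∀ x, ‖iteratedFDeriv ℝ k φ x‖ ≤ Mφ)
    (ψ : (Fin n → ℝ) → ℝ) (hψ : ContDiff ℝ 2 ψ)
    (Mψ : ℝ) (hψb : ∀ k : ℕ, k ≤ 2 → ∀ x, ‖iteratedFDeriv ℝ k ψ x‖ ≤ Mψ)
    (κ u : (Fin n → ℝ) → (Fin n → ℝ))
    (hκm : Measurable κ) (hum : Measurable u)
    (Mκ Mu : ℝ) (hκb : ∀ x i, |κ x i| ≤ Mκ) (hub : ∀ x i, |u x i| ≤ Mu)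
    -- the gradient of a scalar function on `ℝ^n`
    (grad : ((Fin n → ℝ) → ℝ) → (Fin n → ℝ) → (Fin n → ℝ))
    (hgrad : ∀ g x i, grad g x i = fderiv ℝ g x (Pi.single i 1))
    (J1 : ℝ)
    (hJ1 : J1 = ∫ ω, ((1 / 2) * ∑ i, (κ (X ω) i - grad φ (X ω) i) ^ 2
        - (1 / 2) * ∑ i, (grad φ (X ω) i) ^ 2
        + φ (X ω) * (h (X ω) - hhat)) ∂P)
    (J : ℝ → ℝ)
    -- `J Δt = E[f(X, ΔY)] + E[½|T(X̄, ΔY) − X̄|² − f(T(X̄, ΔY), ΔY)]`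
    -- where `ΔY = h(X)Δt + ΔW` and `(X̄, ΔY)` is the independent coupling
    (hJ : ∀ t, J t =
      (∫ ω, (φ (X ω) * (h (X ω) * t + ΔW t ω) + ψ (X ω) * t) ∂P)
      + ∫ ω, ((1 / 2) * ∑ i, (κ (Xb ω) i * (h (X ω) * t + ΔW t ω) + u (Xb ω) i * t) ^ 2
          - (φ (Xb ω + (h (X ω) * t + ΔW t ω) • κ (Xb ω) + t • u (Xb ω))
                * (h (X ω) * t + ΔW t ω)
            + ψ (Xb ω + (h (X ω) * t + ΔW t ω) • κ (Xb ω) + t • u (Xb ω)) * t)) ∂P) :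
    ∃ C > (0 : ℝ), ∃ δ > (0 : ℝ), ∀ t : ℝ, 0 < t → t ≤ δ →
      |J t - J1 * t| ≤ C * t ^ 2 := by
  simp only [hgrad, hhat_def] at hJ1
  simp only [hJ, hJ1]
  have hhX : MemLp (fun ω => h (X ω)) 4 P :=
    .of_bound (hhm.comp hXm).aestronglyMeasurable Mh (.of_forall fun ω => hhb (X ω))
  exact fpf_objective_expansion_general P X hXm h hhm hhX ΔW hΔWm (.of_gaussian hΔWm hΔWlaw)
    hΔWind Xb hXbm hXblaw hXbind φ hφ Mφ hφb ψ hψ Mψ hψb κ u hκm hum Mκ Mu hκb hub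
end
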